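/- arXiv:2511.09505 — 6 statements merged into one kernel-verified Lean document; each statement's English description precedes it below -/
import Mathlib

section
/- Let v_1, ..., v_m be a frame in ℝ^n (a finite spanning family of vectors) that permits phase retrieval and is vital, i.e., the family permits phase retrieval but for every index j the family {v_i}_{i≠j} does not permit phase retrieval. Then m ≤ n(n+1)/2. -/
open Matrix

theorem stmt4 {m n : ℕ} (v : Fin m → Fin n → ℝ)
    (hspan : Submodule.span ℝ (Set.range v) = ⊤)
    (hPR : ∀ x y : Fin n → ℝ,
      (∀ i, (v i ⬝ᵥ x) ^ 2 = (v i ⬝ᵥ y) ^ 2) → x = y ∨ x = -y)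
    (hvital : ∀ j : Fin m, ¬ ∀ x y : Fin n → ℝ,
      (∀ i, i ≠ j → (v i ⬝ᵥ x) ^ 2 = (v i ⬝ᵥ y) ^ 2) → x = y ∨ x = -y) :
    m ≤ n * (n + 1) / 2 := by
  let w : Fin m → Sym2 (Fin n) → ℝ := fun i =>
    Sym2.lift ⟨fun p q => v i p * v i q, fun p q => mul_comm _ _⟩
  have hli : LinearIndependent ℝ w := by
    rw [Fintype.linearIndependent_iff]
    intro g hg j
    have hpq : ∀ p q, ∑ i, g i * (v i p * v i q) = 0 := by
      intro p q
      have := congrFun hg s(p, q)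
      simpa [w, Finset.sum_apply] using this
    have hquad : ∀ x : Fin n → ℝ, ∑ i, g i * (v i ⬝ᵥ x) ^ 2 = 0 := by
      intro x
      have h1 : ∀ i, g i * (v i ⬝ᵥ x) ^ 2
          = ∑ p, ∑ q, x p * x q * (g i * (v i p * v i q)) := by
        intro i
        rw [sq, dotProduct, Finset.sum_mul_sum, Finset.mul_sum]
        refine Finset.sum_congr rfl fun p _ => ?_
        rw [Finset.mul_sum]
        refine Finset.sum_congr rfl fun q _ => ?_
        ring
      simp_rw [h1]
      rw [Finset.sum_comm]
      refine Finset.sum_eq_zero fun p _ => ?_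
      rw [Finset.sum_comm]
      refine Finset.sum_eq_zero fun q _ => ?_
      rw [← Finset.mul_sum, hpq, mul_zero]
    have hj := hvital j
    push Not at hj
    obtain ⟨x, y, hxy, h1, h2⟩ := hj
    have hne : (v j ⬝ᵥ x) ^ 2 ≠ (v j ⬝ᵥ y) ^ 2 := by
      intro he
      have := hPR x y (fun i => by
        by_cases h : i = j
        · rw [h]; exact he
        · exact hxy i h)
      tauto
    have hd : ∑ i, g i * ((v i ⬝ᵥ x) ^ 2 - (v i ⬝ᵥ y) ^ 2) = 0 := by
      simp_rw [mul_sub]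
      rw [Finset.sum_sub_distrib, hquad, hquad, sub_zero]
    rw [Finset.sum_eq_single j (fun i _ hi => by rw [hxy i hi, sub_self, mul_zero])
      (fun h => absurd (Finset.mem_univ j) h)] at hd
    exact (mul_eq_zero.mp hd).resolve_right (sub_ne_zero.mpr hne)
  have hc := hli.fintype_card_le_finrank
  rw [Module.finrank_fintype_fun_eq_card, Sym2.card, Fintype.card_fin, Fintype.card_fin,
    Nat.choose_two_right, Nat.add_sub_cancel, mul_comm] at hc
  exact hc
end

section
/- The frame in ℝ^n consisting of the n(n+1)/2 vectors {e_1, ..., e_n} ∪ {e_i + e_j : 1 ≤ i < j ≤ n} (where e_1, ..., e_n is the standard basis) is vital: it permits phase retrieval, and for every vector w in the family, the family with w removed does not permit phase retrieval. -/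
open Matrix

/-- A family of vectors in `ℝ^n` (given as a set) permits phase retrieval. -/
def RealPhaseRetrieval {n : ℕ} (F : Set (Fin n → ℝ)) : Prop :=
  ∀ x y : Fin n → ℝ, (∀ v ∈ F, (v ⬝ᵥ x) ^ 2 = (v ⬝ᵥ y) ^ 2) → x = y ∨ x = -y

theorem stmt6 (n : ℕ)
    (F : Set (Fin n → ℝ))
    (hF : F = Set.range (fun k : Fin n => (Pi.single k 1 : Fin n → ℝ)) ∪
      {w : Fin n → ℝ | ∃ i j : Fin n, i < j ∧
        w = (Pi.single i 1 : Fin n → ℝ) + Pi.single j 1}) :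
    RealPhaseRetrieval F ∧ ∀ w ∈ F, ¬ RealPhaseRetrieval (F \ {w}) := by
  subst hF
  constructor
  · intro x y h
    have h1 : ∀ k, x k ^ 2 = y k ^ 2 := by
      intro k
      have := h (Pi.single k 1) (Or.inl ⟨k, rfl⟩)
      simpa using this
    have h2 : ∀ i j, i < j → x i * x j = y i * y j := by
      intro i j hij
      have := h _ (Or.inr ⟨i, j, hij, rfl⟩)
      simp only [add_dotProduct, single_dotProduct, one_mul] at this
      nlinarith [h1 i, h1 j]
    have h3 : ∀ i j, x i * x j = y i * y j := by
      intro i j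
      rcases lt_trichotomy i j with hij | rfl | hij
      · exact h2 i j hij
      · nlinarith [h1 i]
      · linarith [h2 j i hij]
    by_cases hx : ∃ k, x k ≠ 0
    · obtain ⟨k, hk⟩ := hx
      rcases sq_eq_sq_iff_eq_or_eq_neg.mp (h1 k) with hc | hc
      · left
        funext j
        apply mul_left_cancel₀ hk
        rw [h3 k j, hc]
      · right
        funext j
        apply mul_left_cancel₀ hk
        rw [h3 k j, hc]
        simp
    · push Not at hx
      left
      funext j
      have := h1 j
      rw [hx j] at this ⊢
      exact (by simpa using this.symm : y j = 0).symm
  · rintro w (⟨k, rfl⟩ | ⟨k, l, hkl, rfl⟩) H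
    · have := H (fun i => if i = k then 0 else 1) (fun i => if i = k then -2 else 1) (by
        rintro v ⟨⟨i, rfl⟩ | ⟨i, j, hij, rfl⟩, hv⟩
        · have hik : i ≠ k := by
            rintro rfl
            exact hv rfl
          simp [hik]
        · simp only [add_dotProduct, single_dotProduct, one_mul]
          have := hij.ne
          split_ifs
          · exact absurd (by simp_all) this
          all_goals norm_num)
      rcases this with h | h <;> simpa using congrFun h k
    · have hne := hkl.ne
      have := H (fun i => if i = k then 1 else if i = l then 1 else 0)
        (fun i => if i = k then 1 else if i = l then -1 else 0) (by
        rintro v ⟨⟨i, rfl⟩ | ⟨i, j, hij, rfl⟩, hv⟩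
        · simp only [single_dotProduct, one_mul]
          split_ifs <;> norm_num
        · have h1 : ¬ (i = k ∧ j = l) := by
            rintro ⟨rfl, rfl⟩
            exact hv rfl
          have h2 : ¬ (i = l ∧ j = k) := by
            rintro ⟨rfl, rfl⟩
            exact lt_asymm hij hkl
          simp only [add_dotProduct, single_dotProduct, one_mul]
          split_ifs <;> first | (norm_num; done) | (exfalso; simp_all))
      rcases this with h | h
      · have := congrFun h l
        simp [hne.symm] at this
        norm_num at this
      · have := congrFun h k
        simp at this
        norm_num at this
end

section
/- Let n ≥ 2 and 2 ≤ w with w dividing n(n-1), and let b = n(n-1)/w. Let B_1, ..., B_b ⊆ {1, ..., n} be the blocks of an (n, w, w-1) block design: each |B_i| = w, and every pair of distinct points of {1, ..., n} lies in exactly w-1 of the blocks. Then there exist vectors v_1, ..., v_b ∈ ℝ^n with supp(v_i) ⊆ B_i for each i, such that the frame {e_1, ..., e_n} ∪ {v_1, ..., v_b} of size n + n(n-1)/w is vital: it permits phase retrieval, and removing any single vector destroys phase retrieval. -/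
open Matrix

/-- An indexed family of vectors in `ℝ^n` permits phase retrieval. -/
def PhaseRetrievalFam {ι : Type*} {n : ℕ} (u : ι → Fin n → ℝ) : Prop :=
  ∀ x y : Fin n → ℝ, (∀ i, (u i ⬝ᵥ x) ^ 2 = (u i ⬝ᵥ y) ^ 2) → x = y ∨ x = -y

lemma aux_ineq (s t a c w : ℕ) (hs : 1 ≤ s) (ht : 1 ≤ t) (hsa : s ≤ a) (htc : t ≤ c)
    (hw : s + t ≤ w) : s * t * (a + c - 1) ≤ a * c * (w - 1) := by
  obtain ⟨s, rfl⟩ := Nat.exists_eq_add_of_le hs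
  obtain ⟨t, rfl⟩ := Nat.exists_eq_add_of_le ht
  obtain ⟨p, rfl⟩ := Nat.exists_eq_add_of_le hsa
  obtain ⟨q, rfl⟩ := Nat.exists_eq_add_of_le htc
  obtain ⟨r, rfl⟩ := Nat.exists_eq_add_of_le hw
  have e1 : 1 + s + p + (1 + t + q) - 1 = 1 + s + t + p + q := by omega
  have e2 : 1 + s + (1 + t) + r - 1 = 1 + s + t + r := by omega
  rw [e1, e2]
  have : (1 + s + p) * (1 + t + q) * (1 + s + t + r) =
    (1 + s) * (1 + t) * (1 + s + t + p + q) + (p * (1 + t) * t + (1 + s) * q * s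
      + p * q * (s + t + 1) + (1 + s + p) * (1 + t + q) * r) := by ring
  omega

lemma count_lemma {n w b : ℕ} (hw : 2 ≤ w) (B : Fin b → Finset (Fin n))
    (hcard : ∀ i, (B i).card = w)
    (hpair : ∀ p q : Fin n, p ≠ q →
      (Finset.univ.filter (fun i => p ∈ B i ∧ q ∈ B i)).card = w - 1)
    (A C : Finset (Fin n)) (hA : A.Nonempty) (hC : C.Nonempty) (hd : Disjoint A C) :
    A.card + C.card - 1 ≤
      (Finset.univ.filter (fun i => (B i ∩ A).Nonempty ∧ (B i ∩ C).Nonempty)).card := by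
  set F := Finset.univ.filter (fun i => (B i ∩ A).Nonempty ∧ (B i ∩ C).Nonempty) with hF
  have h1 : ∑ i, (B i ∩ A).card * (B i ∩ C).card = A.card * C.card * (w - 1) := by
    have : ∀ i, (B i ∩ A).card * (B i ∩ C).card =
        ∑ p ∈ A, ∑ q ∈ C, if p ∈ B i ∧ q ∈ B i then 1 else 0 := by
      intro i
      rw [Finset.inter_comm, Finset.inter_comm (B i) C, ← Finset.filter_mem_eq_inter,
        ← Finset.filter_mem_eq_inter, Finset.card_filter, Finset.card_filter,
        Finset.sum_mul_sum]
      refine Finset.sum_congr rfl fun p _ => Finset.sum_congr rfl fun q _ => ?_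
      by_cases h : p ∈ B i <;> by_cases h' : q ∈ B i <;> simp [h, h']
    simp_rw [this]
    rw [Finset.sum_comm]
    have h2 : ∀ p ∈ A, (∑ i, ∑ q ∈ C, if p ∈ B i ∧ q ∈ B i then 1 else 0) = C.card * (w - 1) := by
      intro p hp
      rw [Finset.sum_comm]
      rw [Finset.sum_congr rfl (g := fun _ => w - 1)]
      · simp
      · intro q hq
        rw [← Finset.card_filter]
        exact hpair p q (fun h => Finset.disjoint_left.mp hd hp (h ▸ hq))
    rw [Finset.sum_congr rfl h2]
    simp [mul_assoc]
  have h3 : ∀ i, (B i ∩ A).card * (B i ∩ C).card * (A.card + C.card - 1) ≤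
      if i ∈ F then A.card * C.card * (w - 1) else 0 := by
    intro i
    split_ifs with h
    · simp only [hF, Finset.mem_filter, Finset.mem_univ, true_and] at h
      refine aux_ineq _ _ _ _ _ h.1.card_pos h.2.card_pos (Finset.card_le_card Finset.inter_subset_right)
        (Finset.card_le_card Finset.inter_subset_right) ?_
      rw [← hcard i, ← Finset.card_union_of_disjoint]
      · exact Finset.card_le_card (Finset.union_subset Finset.inter_subset_left Finset.inter_subset_left)
      · exact hd.mono Finset.inter_subset_right Finset.inter_subset_right
    · simp only [hF, Finset.mem_filter, Finset.mem_univ, true_and, not_and_or,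
        Finset.not_nonempty_iff_eq_empty] at h
      rcases h with h | h <;> simp [h]
  have h4 := Finset.sum_le_sum (s := Finset.univ) (fun i _ => h3 i)
  rw [← Finset.sum_mul, h1] at h4
  simp only [Finset.sum_ite_mem, Finset.univ_inter, Finset.sum_const, smul_eq_mul] at h4
  have hpos : 0 < A.card * C.card * (w - 1) :=
    Nat.mul_pos (Nat.mul_pos hA.card_pos hC.card_pos) (by omega)
  rw [mul_comm F.card] at h4
  exact Nat.le_of_mul_le_mul_left h4 hpos

lemma point_count {n w b : ℕ} (hw : 2 ≤ w) (B : Fin b → Finset (Fin n))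
    (hcard : ∀ i, (B i).card = w)
    (hpair : ∀ p q : Fin n, p ≠ q →
      (Finset.univ.filter (fun i => p ∈ B i ∧ q ∈ B i)).card = w - 1) (p : Fin n) :
    (Finset.univ.filter (fun i => p ∈ B i)).card = n - 1 := by
  have h : ∑ q ∈ Finset.univ.erase p, (Finset.univ.filter (fun i => p ∈ B i ∧ q ∈ B i)).card
      = (n - 1) * (w - 1) := by
    rw [Finset.sum_congr rfl (g := fun _ => w - 1)]
    · simp
    · intro q hq
      exact hpair p q (Finset.ne_of_mem_erase hq).symm
  simp_rw [Finset.card_filter] at h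
  rw [Finset.sum_comm] at h
  have h2 : ∀ i, (∑ q ∈ Finset.univ.erase p, if p ∈ B i ∧ q ∈ B i then 1 else 0) =
      if p ∈ B i then w - 1 else 0 := by
    intro i
    split_ifs with hp
    · simp only [hp, true_and]
      rw [← Finset.card_filter, ← hcard i, ← Finset.card_erase_of_mem hp]
      congr 1
      ext q; simp
    · simp [hp]
  simp_rw [h2] at h
  rw [← Finset.sum_filter, Finset.sum_const, smul_eq_mul] at h
  exact Nat.eq_of_mul_eq_mul_right (by omega) h

/-- Row matrix attached to a partial matching. -/
def rowMat {R : Type*} [CommRing R] {n b : ℕ} (B : Fin b → Finset (Fin n))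
    (f : Fin n → Option (Fin b)) (x : Fin b × Fin n → R) : Matrix (Fin n) (Fin n) R :=
  fun j k => match f j with
    | some i => if k ∈ B i then x (i, k) else 0
    | none => if j = k then 1 else 0

lemma exists_generic {n b : ℕ} (B : Fin b → Finset (Fin n)) :
    ∃ x : Fin b × Fin n → ℝ, ∀ f : Fin n → Option (Fin b),
      (∀ j i, f j = some i → j ∈ B i) →
      (∀ j k i, f j = some i → f k = some i → j = k) →
      (rowMat B f x).det ≠ 0 := by
  classical
  let P : (Fin n → Option (Fin b)) → Prop := fun f =>
    (∀ j i, f j = some i → j ∈ B i) ∧ (∀ j k i, f j = some i → f k = some i → j = k)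
  let D : (Fin n → Option (Fin b)) → MvPolynomial (Fin b × Fin n) ℝ := fun f =>
    (rowMat B f MvPolynomial.X).det
  have hev : ∀ f x, MvPolynomial.eval x (D f) = (rowMat B f x).det := by
    intro f x
    simp only [D]
    rw [RingHom.map_det]
    congr 1
    ext j k
    simp only [RingHom.mapMatrix_apply, Matrix.map_apply, rowMat]
    cases f j with
    | none => simp only []; split_ifs <;> simp
    | some i => simp only []; split_ifs <;> simp
  have hne : ∀ f, P f → D f ≠ 0 := by
    intro f hf h0
    have h := hev f (fun ik => if f ik.2 = some ik.1 then 1 else 0)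
    have h1 : rowMat B f (fun ik : Fin b × Fin n => if f ik.2 = some ik.1 then (1:ℝ) else 0) = 1 := by
      ext j k
      simp only [rowMat, Matrix.one_apply]
      cases hj : f j with
      | none => rfl
      | some i =>
        simp only []
        by_cases hjk : j = k
        · subst hjk; simp [hj, hf.1 j i hj]
        · have : f k ≠ some i := fun hk => hjk (hf.2 j k i hj hk)
          simp [hjk, this]
    rw [h0, h1] at h
    simp at h
  have hprod : (∏ f ∈ Finset.univ.filter P, D f) ≠ 0 :=
    Finset.prod_ne_zero_iff.mpr fun f hf => hne f (Finset.mem_filter.mp hf).2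
  obtain ⟨x, hx⟩ : ∃ x, MvPolynomial.eval x (∏ f ∈ Finset.univ.filter P, D f) ≠ 0 := by
    by_contra! hcon
    exact hprod (MvPolynomial.funext fun x => by rw [hcon x]; simp)
  rw [map_prod, Finset.prod_ne_zero_iff] at hx
  refine ⟨x, fun f h1 h2 => ?_⟩
  rw [← hev]
  exact hx f (by simp only [Finset.mem_filter, Finset.mem_univ, true_and]; exact ⟨h1, h2⟩)

lemma hall_def {n b : ℕ} (B : Fin b → Finset (Fin n)) (x : Fin b × Fin n → ℝ)
    (hx : ∀ f : Fin n → Option (Fin b),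
      (∀ j i, f j = some i → j ∈ B i) →
      (∀ j k i, f j = some i → f k = some i → j = k) →
      (rowMat B f x).det ≠ 0)
    (u : Fin n → ℝ) (hu : u ≠ 0) (T : Finset (Fin b))
    (hT : ∀ i ∈ T, (fun k => if k ∈ B i then x (i, k) else 0) ⬝ᵥ u = 0) :
    ∃ A : Finset (Fin n), (∀ j ∈ A, u j ≠ 0) ∧
      (T.filter (fun i => (B i ∩ A).Nonempty)).card < A.card := by
  classical
  by_contra! hcon
  let t : {j // u j ≠ 0} → Finset (Fin b) := fun j => T.filter (fun i => j.1 ∈ B i)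
  have hall : ∀ s : Finset {j // u j ≠ 0}, s.card ≤ (s.biUnion t).card := by
    intro s
    have := hcon (s.map (Function.Embedding.subtype _)) (by
      intro j hj
      simp only [Finset.mem_map] at hj
      obtain ⟨k, _, rfl⟩ := hj
      exact k.2)
    rw [Finset.card_map] at this
    refine this.trans (Finset.card_le_card ?_)
    intro i hi
    rw [Finset.mem_filter] at hi
    obtain ⟨hiT, k, hk⟩ := hi
    rw [Finset.mem_inter, Finset.mem_map] at hk
    obtain ⟨hkB, k', hk', rfl⟩ := hk
    rw [Finset.mem_biUnion]
    exact ⟨k', hk', Finset.mem_filter.mpr ⟨hiT, hkB⟩⟩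
  obtain ⟨f, hf, hft⟩ := (Finset.all_card_le_biUnion_card_iff_exists_injective t).mp hall
  let g : Fin n → Option (Fin b) := fun j => if h : u j ≠ 0 then some (f ⟨j, h⟩) else none
  have hg : ∀ j i, g j = some i → ∃ h : u j ≠ 0, f ⟨j, h⟩ = i := by
    intro j i h
    by_cases h0 : u j ≠ 0
    · exact ⟨h0, by simpa [g, h0] using h⟩
    · simp [g, h0] at h
  have hdet := hx g (fun j i h => by
      obtain ⟨h0, rfl⟩ := hg j i h
      exact (Finset.mem_filter.mp (hft ⟨j, h0⟩)).2) (fun j k i h h' => by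
      obtain ⟨h0, h1⟩ := hg j i h
      obtain ⟨h0', h1'⟩ := hg k i h'
      exact congrArg Subtype.val (hf (h1.trans h1'.symm)))
  apply hu
  apply Matrix.eq_zero_of_mulVec_eq_zero hdet
  ext j
  cases hj : g j with
  | some i =>
    obtain ⟨h0, rfl⟩ := hg j i hj
    have := hT _ (Finset.mem_filter.mp (hft ⟨j, h0⟩)).1
    simpa [Matrix.mulVec, rowMat, hj] using this
  | none =>
    have h0 : u j = 0 := by
      by_contra h0
      simp [g, h0] at hj
    simp [Matrix.mulVec, rowMat, hj, dotProduct, h0]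

lemma exists_orth {n : ℕ} {κ : Type*} (S : Finset κ) (hS : S.card < n) (v : κ → Fin n → ℝ) :
    ∃ z : Fin n → ℝ, z ≠ 0 ∧ ∀ i ∈ S, v i ⬝ᵥ z = 0 := by
  let L : (Fin n → ℝ) →ₗ[ℝ] (S → ℝ) := Matrix.mulVecLin (Matrix.of fun (i : S) => v i.1)
  have hk : LinearMap.ker L ≠ ⊥ := LinearMap.ker_ne_bot_of_finrank_lt (by simpa using hS)
  obtain ⟨z, hz, hz0⟩ := Submodule.exists_mem_ne_zero_of_ne_bot hk
  refine ⟨z, hz0, fun i hi => ?_⟩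
  exact congrFun (LinearMap.mem_ker.mp hz) ⟨i, hi⟩

lemma not_phase {ι : Type*} {n : ℕ} (u : ι → Fin n → ℝ) (x z : Fin n → ℝ) (hx : x ≠ 0)
    (hz : z ≠ 0) (h : ∀ i, u i ⬝ᵥ x = 0 ∨ u i ⬝ᵥ z = 0) : ¬ PhaseRetrievalFam u := by
  intro hp
  have := hp (x + z) (x - z) (fun i => by
    rw [dotProduct_add, dotProduct_sub]
    rcases h i with h | h <;> rw [h] <;> ring)
  rcases this with h | h
  · apply hz
    ext j
    have := congrFun h j
    simp at this
    simp; linarith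
  · apply hx
    ext j
    have := congrFun h j
    simp at this
    simp; linarith

theorem stmt9 (n w b : ℕ) (hn : 2 ≤ n) (hw : 2 ≤ w) (hdvd : w ∣ n * (n - 1))
    (hb : b = n * (n - 1) / w)
    (B : Fin b → Finset (Fin n))
    (hcard : ∀ i, (B i).card = w)
    (hpair : ∀ p q : Fin n, p ≠ q →
      (Finset.univ.filter (fun i => p ∈ B i ∧ q ∈ B i)).card = w - 1) :
    ∃ v : Fin b → Fin n → ℝ,
      (∀ i, ∀ j : Fin n, v i j ≠ 0 → j ∈ B i) ∧
      PhaseRetrievalFam (Sum.elim (fun k : Fin n => (Pi.single k 1 : Fin n → ℝ)) v) ∧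
      ∀ j₀ : Fin n ⊕ Fin b,
        ¬ PhaseRetrievalFam (fun i : {i : Fin n ⊕ Fin b // i ≠ j₀} =>
            Sum.elim (fun k : Fin n => (Pi.single k 1 : Fin n → ℝ)) v i.1) := by
  classical
  obtain ⟨x, hx⟩ := exists_generic B
  let v : Fin b → Fin n → ℝ := fun i k => if k ∈ B i then x (i, k) else 0
  have hv : ∀ i, ∀ j : Fin n, v i j ≠ 0 → j ∈ B i := by
    intro i j h
    by_contra h'
    exact h (by simp [v, h'])
  refine ⟨v, hv, ?_, ?_⟩
  · intro y y' hy
    by_contra! hne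
    have hu : y + y' ≠ 0 := fun h => hne.2 (eq_neg_of_add_eq_zero_left h)
    have hz : y - y' ≠ 0 := sub_ne_zero.mpr hne.1
    have hprod : ∀ i, (Sum.elim (fun k : Fin n => (Pi.single k 1 : Fin n → ℝ)) v i) ⬝ᵥ (y + y') = 0
        ∨ (Sum.elim (fun k : Fin n => (Pi.single k 1 : Fin n → ℝ)) v i) ⬝ᵥ (y - y') = 0 := by
      intro i
      rw [← mul_eq_zero, dotProduct_add, dotProduct_sub]
      linear_combination hy i
    let T := Finset.univ.filter (fun i => v i ⬝ᵥ (y + y') = 0)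
    obtain ⟨A, hA, hAc⟩ := hall_def B x hx _ hu T (fun i hi => (Finset.mem_filter.mp hi).2)
    obtain ⟨C, hC, hCc⟩ := hall_def B x hx _ hz Tᶜ (fun i hi => by
      have h1 : ¬ (v i ⬝ᵥ (y + y') = 0) := by simpa [T] using hi
      exact (hprod (Sum.inr i)).resolve_left h1)
    have hdis : Disjoint A C := by
      rw [Finset.disjoint_left]
      intro j hjA hjC
      rcases hprod (Sum.inl j) with h | h
      · exact hA j hjA (by simpa using h)
      · exact hC j hjC (by simpa using h)
    have hcount := count_lemma hw B hcard hpair A C (Finset.card_pos.mp (by omega))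
      (Finset.card_pos.mp (by omega)) hdis
    have hle : (Finset.univ.filter (fun i => (B i ∩ A).Nonempty ∧ (B i ∩ C).Nonempty)).card ≤
        (T.filter (fun i => (B i ∩ A).Nonempty)).card +
        (Tᶜ.filter (fun i => (B i ∩ C).Nonempty)).card := by
      refine le_trans (Finset.card_le_card ?_) (Finset.card_union_le _ _)
      intro i hi
      simp only [Finset.mem_filter, Finset.mem_univ, true_and] at hi
      rw [Finset.mem_union]
      by_cases h : i ∈ T
      · exact Or.inl (Finset.mem_filter.mpr ⟨h, hi.1⟩)
      · exact Or.inr (Finset.mem_filter.mpr ⟨Finset.mem_compl.mpr h, hi.2⟩)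
    omega
  · have horth : ∀ (k : Fin n) (i : Fin b), k ∉ B i → v i ⬝ᵥ (Pi.single k 1 : Fin n → ℝ) = 0 := by
      intro k i hk
      simp [v, hk]
    have horth' : ∀ (k j : Fin n), j ≠ k →
        (Pi.single j 1 : Fin n → ℝ) ⬝ᵥ (Pi.single k 1 : Fin n → ℝ) = 0 := by
      intro k j h
      simp [h.symm]
    have hs : ∀ k : Fin n, (Pi.single k 1 : Fin n → ℝ) ≠ 0 := by
      intro k h
      simpa using congrFun h k
    rintro (k | i₀)
    · obtain ⟨z, hz, hzo⟩ := exists_orth (Finset.univ.filter (fun i => k ∈ B i))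
        (by rw [point_count hw B hcard hpair k]; omega) v
      refine not_phase _ (Pi.single k 1) z (hs k) hz ?_
      rintro ⟨j | i, hi⟩
      · exact Or.inl (horth' k j (fun h => hi (by rw [h])))
      · by_cases hk : k ∈ B i
        · exact Or.inr (hzo i (by simp [hk]))
        · exact Or.inl (horth k i hk)
    · obtain ⟨k, hk0⟩ : (B i₀).Nonempty := Finset.card_pos.mp (by rw [hcard]; omega)
      let S : Finset (Fin n ⊕ Fin b) := insert (Sum.inl k)
        (((Finset.univ.filter (fun i => k ∈ B i)).erase i₀).map Function.Embedding.inr)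
      have hS : S.card < n := by
        refine lt_of_le_of_lt (Finset.card_insert_le _ _) ?_
        rw [Finset.card_map, Finset.card_erase_of_mem (by simp [hk0]),
          point_count hw B hcard hpair k]
        omega
      obtain ⟨z, hz, hzo⟩ := exists_orth S hS
        (Sum.elim (fun k : Fin n => (Pi.single k 1 : Fin n → ℝ)) v)
      refine not_phase _ (Pi.single k 1) z (hs k) hz ?_
      rintro ⟨j | i, hi⟩
      · by_cases hjk : j = k
        · subst hjk
          exact Or.inr (hzo (Sum.inl j) (by simp [S]))
        · exact Or.inl (horth' k j hjk)
      · by_cases hk : k ∈ B i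
        · refine Or.inr (hzo (Sum.inr i) ?_)
          have : i ≠ i₀ := fun h => hi (by rw [h])
          simp [S, hk, this]
        · exact Or.inl (horth k i hk)
end

section
/- Let n ≥ 2 and w ≥ 2, and let B_1, ..., B_b ⊆ {1, ..., n} be the blocks of an (n, w, w-1) block design: each |B_i| = w, and every pair of distinct points of {1, ..., n} lies in exactly w-1 blocks. Then for any two nonempty disjoint subsets S, T ⊆ {1, ..., n}, the number of blocks B_i with B_i ∩ S ≠ ∅ and B_i ∩ T ≠ ∅ is at least |S| + |T| - 1. -/
theorem num_aux_le (s t w : ℤ) (hs : 1 ≤ s) (hst : s ≤ t) (hw : 2 ≤ w) :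
    ∃ M : ℤ, 0 < M ∧ (∀ a c : ℤ, 0 ≤ a → 0 ≤ c → a ≤ s → c ≤ t → a + c ≤ w → 4 * (a * c) ≤ M) ∧
      M * (s + t - 1) ≤ 4 * (s * t * (w - 1)) := by
  have ht : 1 ≤ t := hs.trans hst
  by_cases h1 : s + t ≤ w
  · refine ⟨4 * (s * t), by positivity, ?_, ?_⟩
    · intro a c ha hc h2 h3 _
      have := mul_le_mul h2 h3 hc (by lia)
      lia
    · have : 0 ≤ s * t * (w - (s + t)) := mul_nonneg (by positivity) (by lia)
      linarith
  · by_cases h2 : 2 * s ≤ w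
    · have hp : 0 < s * (w - s) := mul_pos (by lia) (by lia)
      refine ⟨4 * (s * (w - s)), by lia, ?_, ?_⟩
      · intro a c ha hc h3 h4 h5
        have e1 : a * c ≤ a * (w - a) := mul_le_mul_of_nonneg_left (by lia) ha
        have e2 : 0 ≤ (s - a) * (w - s - a) := mul_nonneg (by lia) (by lia)
        linarith
      · have : 0 ≤ s * ((s - 1) * (t - (w - s))) :=
          mul_nonneg (by lia) (mul_nonneg (by lia) (by lia))
        linarith
    · refine ⟨w ^ 2, by positivity, ?_, ?_⟩
      · intro a c ha hc h3 h4 h5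
        have e1 : (a + c) ^ 2 ≤ w ^ 2 := pow_le_pow_left₀ (by lia) h5 2
        nlinarith [sq_nonneg (a - c)]
      · have e1 : 0 ≤ (2 * s - w) * (2 * t - w) * (w - 1) :=
          mul_nonneg (mul_nonneg (by lia) (by lia)) (by lia)
        have e2 : 0 ≤ w * (w - 2) * (s + t - w) :=
          mul_nonneg (mul_nonneg (by lia) (by lia)) (by lia)
        linarith

theorem num_aux (s t w : ℤ) (hs : 1 ≤ s) (ht : 1 ≤ t) (hw : 2 ≤ w) :
    ∃ M : ℤ, 0 < M ∧ (∀ a c : ℤ, 0 ≤ a → 0 ≤ c → a ≤ s → c ≤ t → a + c ≤ w → 4 * (a * c) ≤ M) ∧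
      M * (s + t - 1) ≤ 4 * (s * t * (w - 1)) := by
  rcases le_total s t with h | h
  · exact num_aux_le s t w hs h hw
  · obtain ⟨M, h0, h1, h2⟩ := num_aux_le t s w ht h hw
    refine ⟨M, h0, fun a c ha hc h3 h4 h5 => ?_, by linarith⟩
    have := h1 c a hc ha h4 h3 (by lia)
    linarith

theorem stmt14 (n w b : ℕ) (hn : 2 ≤ n) (hw : 2 ≤ w)
    (B : Fin b → Finset (Fin n))
    (hcard : ∀ i, (B i).card = w)
    (hpair : ∀ p q : Fin n, p ≠ q →
      (Finset.univ.filter (fun i => p ∈ B i ∧ q ∈ B i)).card = w - 1) :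
    ∀ S T : Finset (Fin n), S.Nonempty → T.Nonempty → Disjoint S T →
      S.card + T.card - 1 ≤
        (Finset.univ.filter (fun i => (B i ∩ S).Nonempty ∧ (B i ∩ T).Nonempty)).card := by
  intro S T hS hT hd
  have hs := hS.card_pos
  have ht := hT.card_pos
  obtain ⟨M, h0, h1, h2⟩ := num_aux S.card T.card w (by lia) (by lia) (by lia)
  have key : ∑ i, (B i ∩ S).card * (B i ∩ T).card = S.card * T.card * (w - 1) := by
    have e : ∀ i, (B i ∩ S).card * (B i ∩ T).card
        = ∑ p ∈ S, ∑ q ∈ T, if p ∈ B i ∧ q ∈ B i then 1 else 0 := by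
      intro i
      rw [Finset.inter_comm, Finset.inter_comm (B i) T, ← Finset.filter_mem_eq_inter,
        ← Finset.filter_mem_eq_inter, Finset.card_filter, Finset.card_filter,
        Finset.sum_mul_sum]
      refine Finset.sum_congr rfl fun p _ => Finset.sum_congr rfl fun q _ => ?_
      by_cases hp : p ∈ B i <;> by_cases hq : q ∈ B i <;> simp [hp, hq]
    simp_rw [e]
    rw [Finset.sum_comm]
    have e2 : ∀ p ∈ S, ∑ i, ∑ q ∈ T, (if p ∈ B i ∧ q ∈ B i then 1 else 0)
        = T.card * (w - 1) := by
      intro p hp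
      rw [Finset.sum_comm, Finset.sum_congr rfl (g := fun _ => w - 1)]
      · simp
      · intro q hq
        rw [← Finset.card_filter]
        exact hpair p q (fun h => Finset.disjoint_left.mp hd hp (h ▸ hq))
    rw [Finset.sum_congr rfl e2]
    simp [mul_assoc]
  have bound : (∑ i, 4 * (((B i ∩ S).card : ℤ) * ((B i ∩ T).card : ℤ))) ≤
      ∑ i, if (B i ∩ S).Nonempty ∧ (B i ∩ T).Nonempty then M else 0 := by
    refine Finset.sum_le_sum fun i _ => ?_
    split_ifs with h
    · apply h1
      · positivity
      · positivity
      · exact_mod_cast Finset.card_le_card Finset.inter_subset_right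
      · exact_mod_cast Finset.card_le_card Finset.inter_subset_right
      · have hdd : Disjoint (B i ∩ S) (B i ∩ T) :=
          hd.mono Finset.inter_subset_right Finset.inter_subset_right
        have := Finset.card_le_card
          (Finset.union_subset (Finset.inter_subset_left (s₁ := B i) (s₂ := S))
            (Finset.inter_subset_left (s₁ := B i) (s₂ := T)))
        rw [Finset.card_union_of_disjoint hdd, hcard] at this
        exact_mod_cast this
    · rw [not_and_or, Finset.not_nonempty_iff_eq_empty, Finset.not_nonempty_iff_eq_empty] at h
      rcases h with h | h <;> simp [h]
  rw [← Finset.mul_sum, ← Finset.sum_filter, Finset.sum_const, nsmul_eq_mul] at bound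
  have key' : (∑ i, ((B i ∩ S).card : ℤ) * ((B i ∩ T).card : ℤ))
      = S.card * T.card * (w - 1) := by
    have := congrArg (Nat.cast : ℕ → ℤ) key
    push_cast [Nat.cast_sub (show 1 ≤ w by lia)] at this
    exact this
  rw [key'] at bound
  have fin := le_of_mul_le_mul_left ((h2.trans bound).trans_eq (mul_comm _ _)) h0
  lia
end

section
/- Let Σ_1, ..., Σ_n be subsets of {1, ..., n}. There exist vectors w_1, ..., w_n ∈ ℝ^n with supp(w_i) ⊆ Σ_i for each i that span ℝ^n if and only if the sets Σ_1, ..., Σ_n admit a system of distinct representatives, i.e., there exists a permutation σ of {1, ..., n} with σ(i) ∈ Σ_i for all i. -/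
theorem stmt16 (n : ℕ) (Sig : Fin n → Finset (Fin n)) :
    (∃ w : Fin n → Fin n → ℝ,
        (∀ i, ∀ j : Fin n, w i j ≠ 0 → j ∈ Sig i) ∧
        Submodule.span ℝ (Set.range w) = ⊤)
      ↔ ∃ σ : Equiv.Perm (Fin n), ∀ i, σ i ∈ Sig i := by
  constructor
  · rintro ⟨w, hw, hs⟩
    have hli : LinearIndependent ℝ w :=
      linearIndependent_of_top_le_span_of_card_eq_finrank hs.ge (by simp)
    have hu : IsUnit (Matrix.of w) :=
      Matrix.linearIndependent_rows_iff_isUnit.mp hli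
    have hd : (Matrix.of w).transpose.det ≠ 0 := by
      rw [Matrix.det_transpose]
      exact ((Matrix.isUnit_iff_isUnit_det _).mp hu).ne_zero
    rw [Matrix.det_apply] at hd
    obtain ⟨σ, -, hσ⟩ := Finset.exists_ne_zero_of_sum_ne_zero hd
    refine ⟨σ, fun i => hw i _ fun h0 => hσ ?_⟩
    rw [Finset.prod_eq_zero (Finset.mem_univ i) (by simpa using h0), smul_zero]
  · rintro ⟨σ, hσ⟩
    refine ⟨fun i => Pi.single (σ i) 1, fun i j hj => ?_, ?_⟩
    · by_cases h : j = σ i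
      · exact h ▸ hσ i
      · exact absurd (Pi.single_eq_of_ne h _) hj
    · have h := ((Pi.basisFun ℝ (Fin n)).reindex σ.symm).span_eq
      convert h using 3
      ext i j
      simp
end

section
/- Fix n ≥ 1 and consider the 2n index symbols {E_1, ..., E_n, V_1, ..., V_n} with assigned support sets Σ(E_j) = {j} and Σ(V_i) = {1, ..., n} \ {i}. Let S be an n-element subset of these 2n symbols. Then the family of supports (Σ(s))_{s ∈ S} admits a system of distinct representatives (an injection f : S → {1, ..., n} with f(s) ∈ Σ(s) for each s ∈ S) if and only if S is not of the form S_i = {E_k : k ≠ i} ∪ {V_i} for some i ∈ {1, ..., n}. -/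
/-- Support sets of the `2n` symbols: `Σ(E j) = {j}` (symbol `Sum.inl j`) and
`Σ(V i) = {1, …, n} \ {i}` (symbol `Sum.inr i`). -/
def symbolSupport {n : ℕ} : Fin n ⊕ Fin n → Finset (Fin n) :=
  Sum.elim (fun j => {j}) (fun i => Finset.univ.erase i)

theorem stmt17 (n : ℕ) (hn : 1 ≤ n) (S : Finset (Fin n ⊕ Fin n)) (hS : S.card = n) :
    (∃ f : Fin n ⊕ Fin n → Fin n, Set.InjOn f (S : Set (Fin n ⊕ Fin n)) ∧
        ∀ s ∈ S, f s ∈ symbolSupport s)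
      ↔ ¬ ∃ i : Fin n,
          S = insert (Sum.inr i) ((Finset.univ.erase i).image Sum.inl) := by
  have card_erase : ∀ i : Fin n, (Finset.univ.erase i).card = n - 1 := by
    intro i
    rw [Finset.card_erase_of_mem (Finset.mem_univ i), Finset.card_univ, Fintype.card_fin]
  constructor
  · rintro ⟨f, hf, hmem⟩ ⟨i, hi⟩
    have h : S.card ≤ (Finset.univ.erase i).card := by
      refine Finset.card_le_card_of_injOn f ?_ hf
      intro s hs
      have h1 := hmem s hs
      rw [Finset.mem_coe, hi] at hs
      rcases s with j | j <;> simp_all [symbolSupport]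
    rw [card_erase] at h
    omega
  · intro hno
    have hall : ∀ T : Finset (Fin n ⊕ Fin n), T ⊆ S →
        T.card ≤ (T.biUnion symbolSupport).card := by
      intro T hT
      by_cases hV : ∃ i, Sum.inr i ∈ T
      · obtain ⟨i, hiT⟩ := hV
        have hsub : Finset.univ.erase i ⊆ T.biUnion symbolSupport := by
          intro x hx
          exact Finset.mem_biUnion.mpr ⟨_, hiT, hx⟩
        have hTn : T.card ≤ n := (Finset.card_le_card hT).trans hS.le
        by_cases hi : i ∈ T.biUnion symbolSupport
        · have : T.biUnion symbolSupport = Finset.univ := by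
            ext x
            by_cases hx : x = i
            · subst hx; simpa using hi
            · simpa using hsub (by simp [hx] : x ∈ Finset.univ.erase i)
          rw [this]
          simpa using hTn
        · have h1 := Finset.card_le_card hsub
          rw [card_erase] at h1
          by_contra hlt
          have hTS : T = S := Finset.eq_of_subset_of_card_le hT (by omega)
          apply hno
          refine ⟨i, ?_⟩
          subst hTS
          apply Finset.eq_of_subset_of_card_le
          · intro s hs
            have hns : i ∉ symbolSupport s := fun h =>
              hi (Finset.mem_biUnion.mpr ⟨s, hs, h⟩)
            rcases s with j | j
            · simp [symbolSupport] at hns ⊢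
              exact fun h => hns h.symm
            · simp [symbolSupport] at hns ⊢
              exact hns.symm
          · have h2 := Finset.card_insert_le (Sum.inr i : Fin n ⊕ Fin n)
              ((Finset.univ.erase i).image Sum.inl)
            have h3 := Finset.card_image_le (s := Finset.univ.erase i)
              (f := (Sum.inl : Fin n → Fin n ⊕ Fin n))
            rw [card_erase] at h3
            omega
      · refine Finset.card_le_card_of_injOn (Sum.elim id id) ?_ ?_
        · rintro (j | j) hs
          · exact Finset.mem_coe.mpr
              (Finset.mem_biUnion.mpr ⟨_, hs, by simp [symbolSupport]⟩)
          · exact absurd ⟨j, hs⟩ hV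
        · rintro (j | j) hs (k | k) hk h
          · simpa using h
          · exact absurd ⟨k, hk⟩ hV
          · exact absurd ⟨j, hs⟩ hV
          · exact absurd ⟨j, hs⟩ hV
    obtain ⟨f, hf, hmem⟩ := (Finset.all_card_le_biUnion_card_iff_exists_injective
      (fun s : S => symbolSupport s.1)).mp (by
        intro s
        have h := hall (s.map (Function.Embedding.subtype _)) (by
          intro x hx
          obtain ⟨y, _, rfl⟩ := Finset.mem_map.mp hx
          exact y.2)
        rw [Finset.card_map] at h
        refine h.trans (Finset.card_le_card ?_)
        intro x hx
        obtain ⟨y, hy, hxy⟩ := Finset.mem_biUnion.mp hx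
        obtain ⟨z, hz, rfl⟩ := Finset.mem_map.mp hy
        exact Finset.mem_biUnion.mpr ⟨z, hz, hxy⟩)
    refine ⟨fun s => if h : s ∈ S then f ⟨s, h⟩ else ⟨0, hn⟩, ?_, ?_⟩
    · intro a ha b hb hab
      have ha' : a ∈ S := ha
      have hb' : b ∈ S := hb
      simp only [ha', hb', dif_pos] at hab
      exact congrArg Subtype.val (hf hab)
    · intro s hs
      simp only [hs, dif_pos]
      exact hmem ⟨s, hs⟩
end
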